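/- arXiv:2111.13765 — 4 statements merged into one kernel-verified Lean document; each statement's English description precedes it below -/
import Mathlib

section
/- Let (C, Δ) be a coalgebra over a field F and let τ : C ⊗ C → C ⊗ C be the flip x ⊗ y ↦ y ⊗ x. The dual algebra C* satisfies the identities (xy)z − x(yz) = (yx)z − y(xz) and (xy)z = (xz)y (i.e., C* is a Novikov algebra) if and only if (Δ ⊗ id − id ⊗ Δ) ∘ Δ = (τ ⊗ id) ∘ (Δ ⊗ id − id ⊗ Δ) ∘ Δ and (Δ ⊗ id) ∘ Δ = (id ⊗ τ) ∘ (Δ ⊗ id) ∘ Δ as linear maps from C to C ⊗ C ⊗ C. -/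
/-!
Functionals `f ⊗ g ⊗ h` built from triples in `C*` separate the points of `(C ⊗ C) ⊗ C`: over a
field, the coordinate functionals of a basis already do (`triple_ext`). Pairing such a functional
with `(Δ ⊗ id) ∘ Δ` and `(id ⊗ Δ) ∘ Δ` gives `(fg)h` and `f(gh)` respectively, while precomposing
it with a swap of two tensor factors permutes the corresponding functionals. Hence each identity
of `C*` is the pairing of the matching coidentity with all triples, and is equivalent to it.
-/

open TensorProduct

noncomputable section

variable {F C : Type*} [Field F] [AddCommGroup C] [Module F C]

/-- The product of the dual algebra of a coalgebra `(C, Δ)`: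
`(f * g)(a) = Σ f(a₍₁₎) g(a₍₂₎)`. -/
def dualMul (Δ : C →ₗ[F] C ⊗[F] C) (f g : Module.Dual F C) : Module.Dual F C :=
  (TensorProduct.lid F F).toLinearMap ∘ₗ TensorProduct.map f g ∘ₗ Δ

/-- The flip `τ : C ⊗ C → C ⊗ C`, `x ⊗ y ↦ y ⊗ x`. -/
def flipMap : C ⊗[F] C →ₗ[F] C ⊗[F] C := (TensorProduct.comm F C C).toLinearMap

/-- `(Δ ⊗ id) ∘ Δ`, valued in `(C ⊗ C) ⊗ C`. -/
def coassocL (Δ : C →ₗ[F] C ⊗[F] C) : C →ₗ[F] (C ⊗[F] C) ⊗[F] C :=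
  TensorProduct.map Δ LinearMap.id ∘ₗ Δ

/-- `(id ⊗ Δ) ∘ Δ`, rewritten as a map into `(C ⊗ C) ⊗ C`. -/
def coassocR (Δ : C →ₗ[F] C ⊗[F] C) : C →ₗ[F] (C ⊗[F] C) ⊗[F] C :=
  (TensorProduct.assoc F C C C).symm.toLinearMap ∘ₗ
    TensorProduct.map LinearMap.id Δ ∘ₗ Δ

/-- `τ ⊗ id` on `(C ⊗ C) ⊗ C`: swaps the first two tensor factors. -/
def swap12 : (C ⊗[F] C) ⊗[F] C →ₗ[F] (C ⊗[F] C) ⊗[F] C :=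
  TensorProduct.map flipMap LinearMap.id

/-- `id ⊗ τ` on `(C ⊗ C) ⊗ C`: swaps the last two tensor factors. -/
def swap23 : (C ⊗[F] C) ⊗[F] C →ₗ[F] (C ⊗[F] C) ⊗[F] C :=
  (TensorProduct.assoc F C C C).symm.toLinearMap ∘ₗ
    TensorProduct.map LinearMap.id flipMap ∘ₗ (TensorProduct.assoc F C C C).toLinearMap

/-- The functional `(x ⊗ y) ⊗ z ↦ f x * g y * h z` on `(C ⊗ C) ⊗ C`. -/
def triple (f g h : Module.Dual F C) : (C ⊗[F] C) ⊗[F] C →ₗ[F] F :=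
  dualDistrib F _ _ (dualDistrib F _ _ (f ⊗ₜ g) ⊗ₜ h)

lemma triple_tmul (f g h : Module.Dual F C) (x y z : C) :
    triple f g h ((x ⊗ₜ y) ⊗ₜ z) = f x * g y * h z := by
  simp [triple]

/-- Functionals of the form `triple f g h` separate linear maps into `(C ⊗ C) ⊗ C`. -/
lemma triple_ext {A B : C →ₗ[F] (C ⊗[F] C) ⊗[F] C} :
    A = B ↔ ∀ f g h : Module.Dual F C, triple f g h ∘ₗ A = triple f g h ∘ₗ B := by
  refine ⟨fun e _ _ _ => by rw [e], fun H => ?_⟩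
  let b := Module.Basis.ofVectorSpace F C
  let t := (b.tensorProduct b).tensorProduct b
  ext1 a
  refine t.ext_elem fun ⟨⟨i, j⟩, k⟩ => ?_
  -- the coordinate functionals of the tensor product basis are triples of coordinate functionals
  have key : t.coord ((i, j), k) = triple (b.coord i) (b.coord j) (b.coord k) := by
    ext x y z
    simp [t, triple_tmul, mul_comm, mul_left_comm]
  have := LinearMap.congr_fun (H (b.coord i) (b.coord j) (b.coord k)) a
  rw [← key] at this
  simpa using this

lemma triple_coassocL (Δ : C →ₗ[F] C ⊗[F] C) (f g h : Module.Dual F C) :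
    triple f g h ∘ₗ coassocL Δ = dualMul Δ (dualMul Δ f g) h := by
  have key : triple f g h ∘ₗ TensorProduct.map Δ LinearMap.id =
      (TensorProduct.lid F F).toLinearMap ∘ₗ TensorProduct.map (dualMul Δ f g) h := by
    ext x z
    simp only [triple, dualMul]
    induction Δ x using TensorProduct.induction_on <;> simp_all [TensorProduct.dualDistrib]
  rw [coassocL, ← LinearMap.comp_assoc, key]
  rfl

lemma triple_coassocR (Δ : C →ₗ[F] C ⊗[F] C) (f g h : Module.Dual F C) :
    triple f g h ∘ₗ coassocR Δ = dualMul Δ f (dualMul Δ g h) := by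
  have key : triple f g h ∘ₗ (TensorProduct.assoc F C C C).symm.toLinearMap ∘ₗ
        TensorProduct.map LinearMap.id Δ =
      (TensorProduct.lid F F).toLinearMap ∘ₗ TensorProduct.map f (dualMul Δ g h) := by
    ext x z
    simp only [TensorProduct.AlgebraTensorModule.curry_apply, LinearMap.restrictScalars_self,
      TensorProduct.curry_apply, LinearMap.comp_apply, TensorProduct.map_tmul, dualMul,
      LinearMap.id_apply, LinearEquiv.coe_coe, TensorProduct.lid_tmul, smul_eq_mul]
    induction Δ z using TensorProduct.induction_on with
    | zero => simp
    | tmul y z => simp [triple_tmul, mul_assoc]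
    | add u v hu hv => simp only [TensorProduct.tmul_add, map_add, mul_add, hu, hv]
  rw [coassocR]
  calc _ = (triple f g h ∘ₗ (TensorProduct.assoc F C C C).symm.toLinearMap ∘ₗ
        TensorProduct.map LinearMap.id Δ) ∘ₗ Δ := rfl
    _ = _ := by rw [key]; rfl

lemma triple_swap12 (f g h : Module.Dual F C) : triple f g h ∘ₗ swap12 = triple g f h := by
  ext x y z
  simp [swap12, flipMap, triple_tmul, mul_comm]

lemma triple_swap23 (f g h : Module.Dual F C) : triple f g h ∘ₗ swap23 = triple f h g := by
  ext x y z
  simp [swap23, flipMap, triple_tmul, mul_assoc, mul_comm (h y)]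

/-- `(C, Δ)` is a Novikov coalgebra (its dual algebra is a Novikov algebra) if and
only if the two Novikov coidentities hold. -/
theorem novikov_coalgebra_iff (Δ : C →ₗ[F] C ⊗[F] C) :
    ((∀ f g h : Module.Dual F C,
        dualMul Δ (dualMul Δ f g) h - dualMul Δ f (dualMul Δ g h) =
          dualMul Δ (dualMul Δ g f) h - dualMul Δ g (dualMul Δ f h)) ∧
      (∀ f g h : Module.Dual F C,
        dualMul Δ (dualMul Δ f g) h = dualMul Δ (dualMul Δ f h) g)) ↔
    ((coassocL Δ - coassocR Δ = swap12 ∘ₗ (coassocL Δ - coassocR Δ)) ∧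
      (coassocL Δ = swap23 ∘ₗ coassocL Δ)) := by
  simp only [triple_ext, ← LinearMap.comp_assoc, LinearMap.comp_sub, triple_swap12, triple_swap23,
    triple_coassocL, triple_coassocR]

end
end

section
/- Let (C, Δ, d) be an associative and commutative differential coalgebra over a field F, i.e., (Δ ⊗ id) ∘ Δ = (id ⊗ Δ) ∘ Δ, τ ∘ Δ = Δ, and d is a coderivation of (C, Δ). Define Δ_N = (id ⊗ d) ∘ Δ. Then the product in the dual algebra of (C, Δ_N) is given by α ∘ β = α · d*(β), where · denotes the product of the dual algebra of (C, Δ) and d*(β) = β ∘ d, and the dual algebra of (C, Δ_N) is a Novikov algebra, i.e., it satisfies (xy)z − x(yz) = (yx)z − y(xz) and (xy)z = (xz)y. -/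
/-!
Dualizing the three hypotheses turns the dual algebra of `(C, Δ)` into an associative
(`dualMul_assoc_of_coassoc`) and commutative (`dualMul_comm_of_cocomm`) algebra on which
`d* β = β ∘ d` is a derivation (`dualMul_comp_of_coder`). Since the product attached to
`Δ_N = (id ⊗ d) ∘ Δ` is `α · d* β` (`dualMul_map_id_comp`), the claim is the classical
Gelfand–Dorfman computation: the associator
`(α · d*β) · d*γ - α · d*(β · d*γ) = -(α · β) · d*d*γ` is symmetric in `α, β`, and
`(α · d*β) · d*γ` is symmetric in `β, γ`.
-/

open TensorProduct

noncomputable section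

variable {F C : Type*} [Field F] [AddCommGroup C] [Module F C]

theorem dualMul_map_id_comp (Δ : C →ₗ[F] C ⊗[F] C) (d : C →ₗ[F] C) (α β : Module.Dual F C) :
    dualMul (TensorProduct.map LinearMap.id d ∘ₗ Δ) α β = dualMul Δ α (β ∘ₗ d) := by
  unfold dualMul
  rw [← LinearMap.comp_assoc _ _ (TensorProduct.map α β), ← TensorProduct.map_comp,
    LinearMap.comp_id]

theorem dualMul_comm_of_cocomm {Δ : C →ₗ[F] C ⊗[F] C} (h : flipMap ∘ₗ Δ = Δ)
    (α β : Module.Dual F C) : dualMul Δ α β = dualMul Δ β α := by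
  have key : (TensorProduct.lid F F).toLinearMap ∘ₗ TensorProduct.map α β ∘ₗ flipMap =
      (TensorProduct.lid F F).toLinearMap ∘ₗ TensorProduct.map β α := by
    ext x y
    simp [flipMap, mul_comm]
  calc dualMul Δ α β = dualMul (flipMap ∘ₗ Δ) α β := by rw [h]
    _ = ((TensorProduct.lid F F).toLinearMap ∘ₗ TensorProduct.map α β ∘ₗ flipMap) ∘ₗ Δ := rfl
    _ = dualMul Δ β α := by rw [key]; rfl

theorem dualMul_assoc_of_coassoc {Δ : C →ₗ[F] C ⊗[F] C} (h : coassocL Δ = coassocR Δ)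
    (α β γ : Module.Dual F C) :
    dualMul Δ (dualMul Δ α β) γ = dualMul Δ α (dualMul Δ β γ) := by
  -- The functional `(x ⊗ y) ⊗ z ↦ α x * β y * γ z`, through which both sides factor.
  let T : (C ⊗[F] C) ⊗[F] C →ₗ[F] F := (TensorProduct.lid F F).toLinearMap ∘ₗ
    TensorProduct.map ((TensorProduct.lid F F).toLinearMap ∘ₗ TensorProduct.map α β) γ
  have hL : dualMul Δ (dualMul Δ α β) γ = T ∘ₗ coassocL Δ := by
    have key : TensorProduct.map (dualMul Δ α β) γ =
        TensorProduct.map ((TensorProduct.lid F F).toLinearMap ∘ₗ TensorProduct.map α β) γ ∘ₗ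
          TensorProduct.map Δ LinearMap.id := by
      rw [← TensorProduct.map_comp]; rfl
    rw [dualMul, key]; rfl
  have hT : T ∘ₗ (TensorProduct.assoc F C C C).symm.toLinearMap =
      (TensorProduct.lid F F).toLinearMap ∘ₗ
        TensorProduct.map α ((TensorProduct.lid F F).toLinearMap ∘ₗ TensorProduct.map β γ) := by
    ext x y z
    simp [T, mul_assoc]
  have hR : dualMul Δ α (dualMul Δ β γ) = T ∘ₗ coassocR Δ := by
    have key : TensorProduct.map α (dualMul Δ β γ) =
        TensorProduct.map α ((TensorProduct.lid F F).toLinearMap ∘ₗ TensorProduct.map β γ) ∘ₗ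
          TensorProduct.map LinearMap.id Δ := by
      rw [← TensorProduct.map_comp]; rfl
    rw [coassocR, ← LinearMap.comp_assoc, hT, dualMul, key]; rfl
  rw [hL, hR, h]

theorem dualMul_comp_of_coder {Δ : C →ₗ[F] C ⊗[F] C} {d : C →ₗ[F] C}
    (h : Δ ∘ₗ d =
      (TensorProduct.map d LinearMap.id + TensorProduct.map LinearMap.id d) ∘ₗ Δ)
    (α β : Module.Dual F C) :
    dualMul Δ α β ∘ₗ d = dualMul Δ (α ∘ₗ d) β + dualMul Δ α (β ∘ₗ d) := by
  have key : TensorProduct.map α β ∘ₗ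
      (TensorProduct.map d LinearMap.id + TensorProduct.map LinearMap.id d) =
      TensorProduct.map (α ∘ₗ d) β + TensorProduct.map α (β ∘ₗ d) := by
    rw [LinearMap.comp_add, ← TensorProduct.map_comp, ← TensorProduct.map_comp,
      LinearMap.comp_id, LinearMap.comp_id]
  unfold dualMul
  rw [LinearMap.comp_assoc, LinearMap.comp_assoc, h, ← LinearMap.comp_assoc _ _
    (TensorProduct.map α β), key, LinearMap.add_comp, LinearMap.comp_add]

theorem dualMul_add_right (Δ : C →ₗ[F] C ⊗[F] C) (α β γ : Module.Dual F C) :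
    dualMul Δ α (β + γ) = dualMul Δ α β + dualMul Δ α γ := by
  simp only [dualMul, TensorProduct.map_add_right, LinearMap.add_comp, LinearMap.comp_add]

/-- The Gelfand-Dorfman construction for coalgebras: if `(C, Δ, d)` is an associative
and commutative differential coalgebra and `Δ_N = (id ⊗ d) ∘ Δ`, then the dual algebra
of `(C, Δ_N)` has product `α ∘ β = α · d*(β)` and is a Novikov algebra. -/
theorem gelfandDorfman_novikov_coalgebra
    (Δ : C →ₗ[F] C ⊗[F] C) (d : C →ₗ[F] C)
    (hcoassoc : coassocL Δ = coassocR Δ)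
    (hcocomm : flipMap ∘ₗ Δ = Δ)
    (hcoder : Δ ∘ₗ d =
      (TensorProduct.map d LinearMap.id + TensorProduct.map LinearMap.id d) ∘ₗ Δ) :
    (∀ α β : Module.Dual F C,
        dualMul (TensorProduct.map LinearMap.id d ∘ₗ Δ) α β = dualMul Δ α (β ∘ₗ d)) ∧
    (∀ α β γ : Module.Dual F C,
        dualMul (TensorProduct.map LinearMap.id d ∘ₗ Δ)
            (dualMul (TensorProduct.map LinearMap.id d ∘ₗ Δ) α β) γ -
          dualMul (TensorProduct.map LinearMap.id d ∘ₗ Δ) α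
            (dualMul (TensorProduct.map LinearMap.id d ∘ₗ Δ) β γ) =
        dualMul (TensorProduct.map LinearMap.id d ∘ₗ Δ)
            (dualMul (TensorProduct.map LinearMap.id d ∘ₗ Δ) β α) γ -
          dualMul (TensorProduct.map LinearMap.id d ∘ₗ Δ) β
            (dualMul (TensorProduct.map LinearMap.id d ∘ₗ Δ) α γ)) ∧
    (∀ α β γ : Module.Dual F C,
        dualMul (TensorProduct.map LinearMap.id d ∘ₗ Δ)
            (dualMul (TensorProduct.map LinearMap.id d ∘ₗ Δ) α β) γ =
        dualMul (TensorProduct.map LinearMap.id d ∘ₗ Δ)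
            (dualMul (TensorProduct.map LinearMap.id d ∘ₗ Δ) α γ) β) := by
  have hassoc := dualMul_assoc_of_coassoc hcoassoc
  have hcomm := dualMul_comm_of_cocomm hcocomm
  refine ⟨dualMul_map_id_comp Δ d, fun α β γ => ?_, fun α β γ => ?_⟩
  · simp only [dualMul_map_id_comp, dualMul_comp_of_coder hcoder, dualMul_add_right, hassoc]
    -- After cancelling `α · (d*β · d*γ)` what remains is `(α · β) · d*d*γ`, up to order.
    rw [sub_add_cancel_left, sub_add_cancel_left, ← hassoc, ← hassoc, hcomm α β]
  · simp only [dualMul_map_id_comp, hassoc]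
    rw [hcomm (β ∘ₗ d)]

end
end

section
/- Let (C, Δ, d) be an associative and commutative differential coalgebra over a field F, i.e., (Δ ⊗ id) ∘ Δ = (id ⊗ Δ) ∘ Δ, τ ∘ Δ = Δ, and d is a coderivation of (C, Δ). Define Δ_L = (1 − τ) ∘ (id ⊗ d) ∘ Δ. Then the product in the dual algebra of (C, Δ_L) is given by [α, β] = α · d*(β) − d*(α) · β, where · denotes the product of the dual algebra of (C, Δ) and d*(β) = β ∘ d, and this product makes the dual of (C, Δ_L) a Lie algebra: [α, α] = 0 and [[α, β], γ] + [[β, γ], α] + [[γ, α], β] = 0 for all α, β, γ. -/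
/-!
By duality, `A = C*` is a commutative, associative (non-unital) algebra, and `D f = f ∘ d` is a
derivation of it (`dualMul_comm`, `dualMul_assoc`, `dualMul_comp`). The product dual to
`Δ_L` is `[α, β] = α · D β - D α · β` (`dualMul_lie`): the term of `Δ_L` involving `τ`
contributes `β · D α`, which equals `D α · β` by commutativity. This is the usual Wronskian
bracket of a commutative differential algebra. It is alternating by commutativity, and the
Jacobi identity is checked by expanding with the Leibniz rule: the terms with two first
derivatives and those with a second derivative cancel separately in the cyclic sum.
-/

open TensorProduct

noncomputable section

variable {F C : Type*} [Field F] [AddCommGroup C] [Module F C]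

section DualAlgebra

variable (Δ : C →ₗ[F] C ⊗[F] C) (d : C →ₗ[F] C)

lemma dualMul_sub_left (f g h : Module.Dual F C) :
    dualMul Δ (f - g) h = dualMul Δ f h - dualMul Δ g h := by
  have key : TensorProduct.map (f - g) h = TensorProduct.map f h - TensorProduct.map g h := by
    ext x y
    simp [TensorProduct.sub_tmul]
  simp only [dualMul, key, LinearMap.sub_comp, LinearMap.comp_sub]

lemma dualMul_add_left (f g h : Module.Dual F C) :
    dualMul Δ (f + g) h = dualMul Δ f h + dualMul Δ g h := by
  simp only [dualMul, TensorProduct.map_add_left, LinearMap.add_comp, LinearMap.comp_add]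

variable {Δ d}

lemma dualMul_comm (hcocomm : flipMap ∘ₗ Δ = Δ) (f g : Module.Dual F C) :
    dualMul Δ f g = dualMul Δ g f := by
  have key : (TensorProduct.lid F F).toLinearMap ∘ₗ TensorProduct.map f g ∘ₗ flipMap =
      (TensorProduct.lid F F).toLinearMap ∘ₗ TensorProduct.map g f := by
    ext x y
    simp [flipMap, mul_comm]
  calc dualMul Δ f g
      = ((TensorProduct.lid F F).toLinearMap ∘ₗ TensorProduct.map f g ∘ₗ flipMap) ∘ₗ Δ := by
        simp only [dualMul, LinearMap.comp_assoc, hcocomm]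
    _ = dualMul Δ g f := by rw [key]; rfl

lemma dualMul_assoc (hcoassoc : coassocL Δ = coassocR Δ) (f g h : Module.Dual F C) :
    dualMul Δ (dualMul Δ f g) h = dualMul Δ f (dualMul Δ g h) := by
  -- The functional `x ⊗ y ⊗ z ↦ f x * g y * h z`, through which both products factor.
  let φ : (C ⊗[F] C) ⊗[F] C →ₗ[F] F := (TensorProduct.lid F F).toLinearMap ∘ₗ
    TensorProduct.map ((TensorProduct.lid F F).toLinearMap ∘ₗ TensorProduct.map f g) h
  have hL : dualMul Δ (dualMul Δ f g) h = φ ∘ₗ coassocL Δ := by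
    simp only [φ, dualMul, coassocL, LinearMap.comp_assoc]
    rw [← LinearMap.comp_assoc Δ (TensorProduct.map Δ _), ← TensorProduct.map_comp]
    rfl
  have hφ : φ ∘ₗ (TensorProduct.assoc F C C C).symm.toLinearMap =
      (TensorProduct.lid F F).toLinearMap ∘ₗ
        TensorProduct.map f ((TensorProduct.lid F F).toLinearMap ∘ₗ TensorProduct.map g h) := by
    ext x y z
    simp [φ, mul_assoc]
  have hR : dualMul Δ f (dualMul Δ g h) = φ ∘ₗ coassocR Δ := by
    rw [coassocR, ← LinearMap.comp_assoc, hφ, dualMul, LinearMap.comp_assoc]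
    rw [← LinearMap.comp_assoc Δ (TensorProduct.map _ Δ), ← TensorProduct.map_comp]
    rfl
  rw [hL, hR, hcoassoc]

/-- The transpose of a coderivation is a derivation of the dual algebra. -/
lemma dualMul_comp
    (hcoder : Δ ∘ₗ d =
      (TensorProduct.map d LinearMap.id + TensorProduct.map LinearMap.id d) ∘ₗ Δ)
    (f g : Module.Dual F C) :
    dualMul Δ f g ∘ₗ d = dualMul Δ (f ∘ₗ d) g + dualMul Δ f (g ∘ₗ d) := by
  simp only [dualMul, LinearMap.comp_assoc, hcoder]
  simp only [LinearMap.add_comp, LinearMap.comp_add]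
  simp only [← LinearMap.comp_assoc Δ, ← TensorProduct.map_comp, LinearMap.comp_id]

lemma dualMul_lie (hcocomm : flipMap ∘ₗ Δ = Δ) (α β : Module.Dual F C) :
    dualMul ((LinearMap.id - flipMap) ∘ₗ TensorProduct.map LinearMap.id d ∘ₗ Δ) α β =
      dualMul Δ α (β ∘ₗ d) - dualMul Δ (α ∘ₗ d) β := by
  rw [dualMul_comm hcocomm (α ∘ₗ d) β]
  have key : (TensorProduct.lid F F).toLinearMap ∘ₗ TensorProduct.map α β ∘ₗ
        (LinearMap.id - flipMap) ∘ₗ TensorProduct.map LinearMap.id d =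
      (TensorProduct.lid F F).toLinearMap ∘ₗ TensorProduct.map α (β ∘ₗ d) -
        (TensorProduct.lid F F).toLinearMap ∘ₗ TensorProduct.map β (α ∘ₗ d) := by
    ext x y
    simp [flipMap, mul_comm]
  exact congrArg (· ∘ₗ Δ) key

end DualAlgebra

/-- The Gelfand-Dorfman construction for coalgebras, Lie part: if `(C, Δ, d)` is an
associative and commutative differential coalgebra and `Δ_L = (1 - τ) ∘ (id ⊗ d) ∘ Δ`,
then the dual algebra of `(C, Δ_L)` has product `[α, β] = α · d*(β) - d*(α) · β` and is
a Lie algebra. -/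
theorem gelfandDorfman_lie_coalgebra
    (Δ : C →ₗ[F] C ⊗[F] C) (d : C →ₗ[F] C)
    (hcoassoc : coassocL Δ = coassocR Δ)
    (hcocomm : flipMap ∘ₗ Δ = Δ)
    (hcoder : Δ ∘ₗ d =
      (TensorProduct.map d LinearMap.id + TensorProduct.map LinearMap.id d) ∘ₗ Δ) :
    (∀ α β : Module.Dual F C,
        dualMul ((LinearMap.id - flipMap) ∘ₗ TensorProduct.map LinearMap.id d ∘ₗ Δ) α β =
          dualMul Δ α (β ∘ₗ d) - dualMul Δ (α ∘ₗ d) β) ∧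
    (∀ α : Module.Dual F C,
        dualMul ((LinearMap.id - flipMap) ∘ₗ TensorProduct.map LinearMap.id d ∘ₗ Δ) α α = 0) ∧
    (∀ α β γ : Module.Dual F C,
        dualMul ((LinearMap.id - flipMap) ∘ₗ TensorProduct.map LinearMap.id d ∘ₗ Δ)
            (dualMul ((LinearMap.id - flipMap) ∘ₗ TensorProduct.map LinearMap.id d ∘ₗ Δ) α β) γ +
          dualMul ((LinearMap.id - flipMap) ∘ₗ TensorProduct.map LinearMap.id d ∘ₗ Δ)
            (dualMul ((LinearMap.id - flipMap) ∘ₗ TensorProduct.map LinearMap.id d ∘ₗ Δ) β γ) α +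
          dualMul ((LinearMap.id - flipMap) ∘ₗ TensorProduct.map LinearMap.id d ∘ₗ Δ)
            (dualMul ((LinearMap.id - flipMap) ∘ₗ TensorProduct.map LinearMap.id d ∘ₗ Δ) γ α) β
          = 0) := by
  refine ⟨dualMul_lie hcocomm, fun α => ?_, fun α β γ => ?_⟩
  · rw [dualMul_lie hcocomm, dualMul_comm hcocomm (α ∘ₗ d) α, sub_self]
  · have hcomm := dualMul_comm hcocomm
    have hassoc := dualMul_assoc hcoassoc
    have hleft (f g h : Module.Dual F C) :
        dualMul Δ f (dualMul Δ g h) = dualMul Δ g (dualMul Δ f h) := by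
      rw [← hassoc, hcomm f g, hassoc]
    simp only [dualMul_lie hcocomm]
    simp only [LinearMap.sub_comp, dualMul_comp hcoder, dualMul_sub_left, dualMul_add_left]
    simp only [hassoc, hcomm, hleft]
    abel

end
end

section
/- Let (C, Δ) be a coalgebra over a field F of characteristic ≠ 2 and let τ : C ⊗ C → C ⊗ C be the flip x ⊗ y ↦ y ⊗ x. The dual algebra C* satisfies the right-alternative identity (yx)x = y(x²) (equivalently, the associator identity (y, x, x) = 0) if and only if (Δ ⊗ id − id ⊗ Δ) ∘ Δ + (id ⊗ τ) ∘ (Δ ⊗ id − id ⊗ Δ) ∘ Δ = 0 as a linear map from C to C ⊗ C ⊗ C. -/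
/-! For functionals `f, g, h`, the functional `f ⊗ g ⊗ h` on `C ⊗ C ⊗ C` sends
`(Δ ⊗ id - id ⊗ Δ)(Δ a)` to the associator `(f, g, h)` evaluated at `a`
(`eval3_coassocL`, `eval3_coassocR`), and precomposing it with `id ⊗ τ` exchanges `g` and `h`
(`eval3_swap23`). Pure tensors of functionals separate the points of `C ⊗ C ⊗ C`
(`eq_zero_of_eval3`), so the tensor identity says exactly that `(f, g, h) + (f, h, g) = 0` for all
`f, g, h`. This is the polarization of `(f, g, g) = 0`, and is equivalent to it
because `2` is invertible. -/

open TensorProduct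

noncomputable section

variable {F C : Type*} [Field F] [AddCommGroup C] [Module F C]

/-- The functional `f ⊗ g ⊗ h` on `(C ⊗ C) ⊗ C`. -/
def eval3 (f g h : Module.Dual F C) : (C ⊗[F] C) ⊗[F] C →ₗ[F] F :=
  (TensorProduct.lid F F).toLinearMap ∘ₗ
    TensorProduct.map ((TensorProduct.lid F F).toLinearMap ∘ₗ TensorProduct.map f g) h

@[simp]
lemma eval3_tmul (f g h : Module.Dual F C) (x y z : C) :
    eval3 f g h ((x ⊗ₜ y) ⊗ₜ z) = f x * g y * h z := by
  simp [eval3]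

lemma eval3_add_mid (f g g' h : Module.Dual F C) :
    eval3 f (g + g') h = eval3 f g h + eval3 f g' h := by
  refine TensorProduct.ext_threefold fun x y z => ?_
  simp only [eval3_tmul, LinearMap.add_apply]
  ring

lemma eval3_add_right (f g h h' : Module.Dual F C) :
    eval3 f g (h + h') = eval3 f g h + eval3 f g h' := by
  refine TensorProduct.ext_threefold fun x y z => ?_
  simp only [eval3_tmul, LinearMap.add_apply]
  ring

lemma eval3_swap23 (f g h : Module.Dual F C) (t : (C ⊗[F] C) ⊗[F] C) :
    eval3 f g h (swap23 t) = eval3 f h g t := by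
  have H : eval3 f g h ∘ₗ swap23 = eval3 f h g := by
    refine TensorProduct.ext_threefold fun x y z => ?_
    simp only [swap23, flipMap, LinearMap.comp_apply, LinearEquiv.coe_coe,
      TensorProduct.assoc_tmul, TensorProduct.map_tmul, LinearMap.id_apply,
      TensorProduct.comm_tmul, TensorProduct.assoc_symm_tmul, eval3_tmul]
    ring
  exact LinearMap.congr_fun H t

lemma eval3_coassocL (Δ : C →ₗ[F] C ⊗[F] C) (f g h : Module.Dual F C) (a : C) :
    eval3 f g h (coassocL Δ a) = dualMul Δ (dualMul Δ f g) h a := by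
  have H : eval3 f g h ∘ₗ TensorProduct.map Δ LinearMap.id =
      (TensorProduct.lid F F).toLinearMap ∘ₗ TensorProduct.map (dualMul Δ f g) h := by
    refine TensorProduct.ext' fun x y => ?_
    simp [eval3, dualMul]
  exact LinearMap.congr_fun H (Δ a)

lemma eval3_coassocR (Δ : C →ₗ[F] C ⊗[F] C) (f g h : Module.Dual F C) (a : C) :
    eval3 f g h (coassocR Δ a) = dualMul Δ f (dualMul Δ g h) a := by
  have H : eval3 f g h ∘ₗ (TensorProduct.assoc F C C C).symm.toLinearMap ∘ₗ
        TensorProduct.map LinearMap.id Δ =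
      (TensorProduct.lid F F).toLinearMap ∘ₗ TensorProduct.map f (dualMul Δ g h) := by
    refine TensorProduct.ext' fun x y => ?_
    simp only [dualMul, LinearMap.comp_apply, LinearEquiv.coe_coe, TensorProduct.map_tmul,
      LinearMap.id_apply, TensorProduct.lid_tmul, smul_eq_mul]
    induction Δ y with
    | zero => simp
    | tmul u v => simp [mul_assoc]
    | add s t hs ht => simp only [TensorProduct.tmul_add, map_add, hs, ht, mul_add]
  exact LinearMap.congr_fun H (Δ a)

/-- The coordinates in the tensor cube of a basis of `C` are functionals of the form
`f ⊗ g ⊗ h`, so these separate points, even when `C` is infinite-dimensional. -/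
lemma eq_zero_of_eval3 (t : (C ⊗[F] C) ⊗[F] C)
    (ht : ∀ f g h : Module.Dual F C, eval3 f g h t = 0) : t = 0 := by
  let b := Module.Basis.ofVectorSpace F C
  let B := (b.tensorProduct b).tensorProduct b
  refine B.forall_coord_eq_zero_iff.mp ?_
  rintro ⟨⟨i, j⟩, k⟩
  have H : B.coord ((i, j), k) = eval3 (b.coord i) (b.coord j) (b.coord k) := by
    refine TensorProduct.ext_threefold fun x y z => ?_
    simp [B, mul_comm, mul_left_comm]
  rw [H, ht]

/-- Over a field of characteristic `≠ 2`, a coalgebra `(C, Δ)` is right-alternative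
(its dual algebra satisfies `(yx)x = y x²`, i.e. `(y, x, x) = 0`) if and only if
`(Δ ⊗ id - id ⊗ Δ) ∘ Δ + (id ⊗ τ) ∘ (Δ ⊗ id - id ⊗ Δ) ∘ Δ = 0`. -/
theorem rightAlternative_coalgebra_iff
    (hchar : (2 : F) ≠ 0) (Δ : C →ₗ[F] C ⊗[F] C) :
    (∀ f g : Module.Dual F C,
        dualMul Δ (dualMul Δ f g) g = dualMul Δ f (dualMul Δ g g)) ↔
    (coassocL Δ - coassocR Δ) + swap23 ∘ₗ (coassocL Δ - coassocR Δ) = 0 := by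
  constructor
  · intro H
    have assoc_eq : ∀ (f g : Module.Dual F C) (a : C),
        eval3 f g g ((coassocL Δ - coassocR Δ) a) = 0 := fun f g a => by
      rw [LinearMap.sub_apply, map_sub, eval3_coassocL, eval3_coassocR, H, sub_self]
    ext a
    refine eq_zero_of_eval3 _ fun f g h => ?_
    rw [LinearMap.add_apply, map_add, LinearMap.comp_apply, eval3_swap23]
    -- Polarize: expand `(f, g + h, g + h) = 0`.
    have h1 := assoc_eq f (g + h) a
    simp only [eval3_add_mid, eval3_add_right, LinearMap.add_apply, assoc_eq] at h1
    linear_combination h1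
  · intro H f g
    ext a
    have h1 := congrArg (eval3 f g g) (LinearMap.congr_fun H a)
    rw [LinearMap.add_apply, map_add, LinearMap.comp_apply, eval3_swap23, LinearMap.sub_apply,
      map_sub, eval3_coassocL, eval3_coassocR, LinearMap.zero_apply, map_zero, ← two_mul] at h1
    exact sub_eq_zero.mp ((mul_eq_zero.mp h1).resolve_left hchar)


end
end
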